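/- arXiv:1611.09135 — 2 statements merged into one kernel-verified Lean document; each statement's English description precedes it below -/
import Mathlib

section
/- The subspace span{x^s : s ∈ S} is an algebraic complement of the polynomial range of D in ℝ[x]: range(D) ∩ span{x^s : s ∈ S} = {0} and range(D) + span{x^s : s ∈ S} = ℝ[x]. -/
open Polynomial

/-!
Let `W` be a subspace of polynomials over a division ring, `S` the set of degrees missing from `W`,
and `B` a sequence of polynomials with `deg (B s) = s`. Nonzero elements of `span (B '' S)` have
degree in `S` and nonzero elements of `W` have degree outside `S`, so the two spaces meet trivially.
Together they contain a polynomial of every degree, hence they span everything. The theorem is the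
case where `W` is the range of `D` and `B s = X ^ s`.
-/

section Semiring

variable {R : Type*} [Semiring R]

/-- The natural numbers that are not the degree of any element of `W`. Using `degree` rather than
`natDegree` keeps the zero polynomial from counting as an element of degree `0`. -/
def inaccessibleDegrees (W : Submodule R R[X]) : Set ℕ :=
  {s | ∀ f ∈ W, f.degree ≠ s}

theorem mem_inaccessibleDegrees_iff_natDegree {W : Submodule R R[X]} {s : ℕ} :
    s ∈ inaccessibleDegrees W ↔ ∀ f ∈ W, f ≠ 0 → f.natDegree ≠ s := by
  refine forall₂_congr fun f _ => ?_
  rcases eq_or_ne f 0 with rfl | hf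
  · simp
  · simp [hf, degree_eq_iff_natDegree_eq hf]

end Semiring

section Ring

variable {R : Type*} [Ring R] [IsDomain R]

theorem natDegree_mem_of_mem_span_sequence_image {B : Sequence R}
    (hB : ∀ i, IsUnit (B i).leadingCoeff) {S : Set ℕ} {f : R[X]}
    (hf : f ∈ Submodule.span R (B '' S)) (hf0 : f ≠ 0) : f.natDegree ∈ S := by
  have mem_span_iff (T : Set ℕ) :
      f ∈ Submodule.span R (B '' T) ↔ ↑((B.basis hB).repr f).support ⊆ T := by
    simpa using (B.basis hB).mem_span_image (m := f) (s := T)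
  have support_subset_Iic : ↑((B.basis hB).repr f).support ⊆ Set.Iic f.natDegree := by
    rw [← mem_span_iff, B.span_degreeLE fun i _ => hB i, mem_degreeLE]
    exact degree_le_natDegree
  -- Otherwise `f` would be a combination of terms of `B` of degree less than that of `f`.
  by_contra hdeg
  have support_subset_Iio : ↑((B.basis hB).repr f).support ⊆ Set.Iio f.natDegree := fun i hi =>
    lt_of_le_of_ne (support_subset_Iic hi)
      (ne_of_mem_of_not_mem ((mem_span_iff S).mp hf hi) hdeg)
  have degree_lt : f.degree < f.natDegree := by
    rwa [← mem_degreeLT, ← B.span_degreeLT fun i _ => hB i, mem_span_iff]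
  exact degree_lt.ne (degree_eq_natDegree hf0)

theorem disjoint_span_sequence_image_inaccessibleDegrees {B : Sequence R}
    (hB : ∀ i, IsUnit (B i).leadingCoeff) (W : Submodule R R[X]) :
    Disjoint W (Submodule.span R (B '' inaccessibleDegrees W)) := by
  refine Submodule.disjoint_def.mpr fun f hfW hfB => by_contra fun hf0 => ?_
  exact natDegree_mem_of_mem_span_sequence_image hB hfB hf0 f hfW (degree_eq_natDegree hf0)

end Ring

section DivisionRing

variable {K : Type*} [DivisionRing K]

theorem isUnit_leadingCoeff_sequence (B : Sequence K) (i : ℕ) : IsUnit (B i).leadingCoeff :=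
  (leadingCoeff_ne_zero.mpr (B.ne_zero i)).isUnit

theorem submodule_eq_top_of_forall_exists_degree_eq {V : Submodule K K[X]}
    (hV : ∀ n : ℕ, ∃ f ∈ V, f.degree = n) : V = ⊤ := by
  choose f hfV hfdeg using hV
  let B : Sequence K := ⟨f, hfdeg⟩
  rw [← top_le_iff, ← B.span (isUnit_leadingCoeff_sequence B), Submodule.span_le]
  exact Set.range_subset_iff.mpr hfV

theorem codisjoint_span_sequence_image_inaccessibleDegrees (B : Sequence K)
    (W : Submodule K K[X]) :
    Codisjoint W (Submodule.span K (B '' inaccessibleDegrees W)) := by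
  refine codisjoint_iff.mpr (submodule_eq_top_of_forall_exists_degree_eq fun n => ?_)
  by_cases hn : n ∈ inaccessibleDegrees W
  · exact ⟨B n, Submodule.mem_sup_right (Submodule.subset_span ⟨n, hn, rfl⟩), B.degree_eq n⟩
  · obtain ⟨f, hfW, hfdeg⟩ : ∃ f ∈ W, f.degree = n := by
      simpa [inaccessibleDegrees] using hn
    exact ⟨f, Submodule.mem_sup_left hfW, hfdeg⟩

theorem stmt_13_general (B : Sequence K) (W : Submodule K K[X]) :
    IsCompl W (Submodule.span K (B '' inaccessibleDegrees W)) :=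
  ⟨disjoint_span_sequence_image_inaccessibleDegrees (isUnit_leadingCoeff_sequence B) W,
    codisjoint_span_sequence_image_inaccessibleDegrees B W⟩

end DivisionRing

/-- The residual space `span {Xˢ : s ∈ S}` is an algebraic complement
of the polynomial range of `D` in `ℝ[x]`:
`range D ⊓ span {Xˢ : s ∈ S} = ⊥` and `range D ⊔ span {Xˢ : s ∈ S} = ⊤`. -/
theorem stmt_13 (ν : ℕ) (p : ℕ → Polynomial ℝ) (hp : ∃ i ≤ ν, p i ≠ 0)
    (D : Polynomial ℝ →ₗ[ℝ] Polynomial ℝ)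
    (hD : ∀ q, D q = ∑ i ∈ Finset.range (ν + 1), p i * (Polynomial.derivative^[i] q))
    (h : ℤ)
    (hh : IsGreatest {z : ℤ | ∃ i ≤ ν, p i ≠ 0 ∧ z = ((p i).natDegree : ℤ) - i} h)
    (N : ℕ)
    (hN : ∀ n : ℕ, N < n → D (X ^ n) ≠ 0 ∧ ((D (X ^ n)).natDegree : ℤ) = n + h)
    (S : Set ℕ)
    (hS : S = {s : ℕ | ∀ q : Polynomial ℝ, D q ≠ 0 → (D q).natDegree ≠ s}) :
    LinearMap.range D ⊓ Submodule.span ℝ {r : Polynomial ℝ | ∃ s ∈ S, r = X ^ s} = ⊥ ∧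
    LinearMap.range D ⊔ Submodule.span ℝ {r : Polynomial ℝ | ∃ s ∈ S, r = X ^ s} = ⊤ := by
  have hcompl : IsCompl (LinearMap.range D)
      (Submodule.span ℝ {r : Polynomial ℝ | ∃ s ∈ S, r = X ^ s}) := by
    simpa [hS, Set.image, mem_inaccessibleDegrees_iff_natDegree, eq_comm] using
      stmt_13_general ⟨(X ^ ·), degree_X_pow⟩ (LinearMap.range D)
  exact ⟨hcompl.inf_eq_bot, hcompl.sup_eq_top⟩
end

section
/- There exists a family s = (s_n)_{n∈ℕ} of real polynomials such that: (a) s is a basis of ℝ[x] (linearly independent and spanning); (b) s_n = x^n for every n > N; (c) s_n ∈ span{x^k : 0 ≤ k ≤ N} for every n ≤ N; (d) every n with D(s_n) = 0 satisfies n ≤ N; and (e) the map n ↦ deg D(s_n) is strictly increasing on the set {n ∈ ℕ : D(s_n) ≠ 0}. (That is, the matrix of D relative to (s, x) is in pre-lower-row-echelon form, and s is a standard basis associated with D relative to the monomial basis.) -/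
open Polynomial

/-!
On a finite-dimensional space `V`, a nonzero linear map `f : V → K[X]` attains its maximal degree
at some `v`, and the images of the vectors in the hyperplane where the coefficient of that degree
vanishes have smaller degree. Induction on the dimension thus gives a basis of `V` on which the
degrees of the nonzero images increase strictly. For `D` on the polynomials of degree at most `N`
this basis provides `s 0, …, s N`. Since `D` raises degrees by at most `h`, and by exactly `h` on
`X ^ n` for `n > N`, the degrees still increase after it is completed by these monomials.
-/

section Bases

open Module

lemma exists_ne_zero_and_forall_natDegree_le {R M : Type*} [Semiring R]
    [AddCommMonoid M] [Module R M] [Module.Finite R M] {f : M →ₗ[R] R[X]} (hf : f ≠ 0) :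
    ∃ v, f v ≠ 0 ∧ ∀ w, (f w).natDegree ≤ (f v).natDegree := by
  obtain ⟨S, hS, hspan⟩ := Submodule.fg_def.mp (Module.Finite.iff_fg.mp (Module.Finite.range f))
  obtain ⟨n, hn⟩ := span_of_finite_le_degreeLT hS
  have hle (w : M) : (f w).natDegree ≤ n :=
    natDegree_le_of_degree_le (mem_degreeLT.mp (hn (hspan ▸ LinearMap.mem_range_self f w))).le
  have hbdd : BddAbove ((fun w => (f w).natDegree) '' {w | f w ≠ 0}) :=
    ⟨n, Set.forall_mem_image.mpr fun w _ => hle w⟩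
  obtain ⟨v, hv, hmax⟩ := Nat.sSup_mem (Set.Nonempty.image _ (DFunLike.ne_iff.mp hf)) hbdd
  refine ⟨v, hv, fun w => ?_⟩
  rcases eq_or_ne (f w) 0 with hw | hw
  · simp [hw]
  · exact (le_csSup hbdd (Set.mem_image_of_mem _ hw)).trans_eq hmax.symm

lemma exists_basis_ker_snoc {K V : Type*} [DivisionRing K] [AddCommGroup V] [Module K V]
    {g : V →ₗ[K] K} {v : V} (hv : g v ≠ 0) {n : ℕ} (b : Basis (Fin n) K (LinearMap.ker g)) :
    ∃ c : Basis (Fin (n + 1)) K V, (∀ i, c (Fin.castSucc i) = b i) ∧ c (Fin.last n) = v := by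
  refine ⟨Basis.mkFinSnoc b v (fun a x hx hax => ?_) (fun z => ⟨-(g z / g v), ?_⟩), ?_⟩
  · simpa [LinearMap.mem_ker.mp hx, hv] using congrArg g hax
  · simp [hv]
  · simp

theorem exists_basis_strictMonoOn_natDegree {K V : Type*} [Field K] [AddCommGroup V] [Module K V]
    [FiniteDimensional K V] (f : V →ₗ[K] K[X]) {n : ℕ} (hn : finrank K V = n) :
    ∃ b : Basis (Fin n) K V, StrictMonoOn (fun i => (f (b i)).natDegree) {i | f (b i) ≠ 0} := by
  induction n generalizing V with
  | zero => exact ⟨finBasisOfFinrankEq K V hn, fun i => i.elim0⟩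
  | succ n ih =>
    rcases eq_or_ne f 0 with rfl | hf
    · exact ⟨finBasisOfFinrankEq K V hn, fun i hi => absurd rfl hi⟩
    obtain ⟨v, hv, hmax⟩ := exists_ne_zero_and_forall_natDegree_le hf
    let g : V →ₗ[K] K := lcoeff K (f v).natDegree ∘ₗ f
    have hgv : g v ≠ 0 := leadingCoeff_ne_zero.mpr hv
    have hlt {w : V} (hw : w ∈ LinearMap.ker g) (hfw : f w ≠ 0) :
        (f w).natDegree < (f v).natDegree := by
      refine (hmax w).lt_of_ne fun heq => leadingCoeff_ne_zero.mpr hfw ?_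
      rw [leadingCoeff, heq]
      exact hw
    have hker : finrank K (LinearMap.ker g) = n := by
      have := Module.Dual.finrank_ker_add_one_of_ne_zero (f := g) (fun h => hgv (by simp [h]))
      omega
    obtain ⟨b, hb⟩ := ih (f.domRestrict (LinearMap.ker g)) hker
    obtain ⟨c, hcb, hcv⟩ := exists_basis_ker_snoc hgv b
    refine ⟨c, fun i hi j hj hij => ?_⟩
    obtain ⟨i, rfl⟩ := Fin.exists_castSucc_eq.mpr (Fin.ne_last_of_lt hij)
    simp only [Set.mem_ofPred_eq, hcb] at hi hj ⊢
    induction j using Fin.lastCases with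
    | last => exact hcv ▸ hlt (b i).2 hi
    | cast j =>
      rw [hcb] at hj ⊢
      exact hb hi hj (Fin.castSucc_lt_castSucc_iff.mp hij)

lemma span_range_coe_basis {R M ι : Type*} [Semiring R] [AddCommMonoid M] [Module R M]
    {W : Submodule R M} (b : Basis ι R W) :
    Submodule.span R (Set.range fun i => (b i : M)) = W := by
  rw [← W.coe_subtype, ← Function.comp_def, Set.range_comp, Submodule.span_image, b.span_eq,
    Submodule.map_subtype_top]

lemma exists_basis_sum_replace_inl {R M ι κ : Type*} [Ring R] [AddCommGroup M] [Module R M]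
    (c : Basis (ι ⊕ κ) R M) {W : Submodule R M}
    (hW : Submodule.span R (Set.range (c ∘ Sum.inl)) = W) (b : Basis ι R W) :
    ∃ c' : Basis (ι ⊕ κ) R M,
      (∀ i, c' (Sum.inl i) = b i) ∧ ∀ j, c' (Sum.inr j) = c (Sum.inr j) := by
  let s : ι ⊕ κ → M := Sum.elim (fun i => (b i : M)) (c ∘ Sum.inr)
  have hb : Submodule.span R (Set.range fun i => (b i : M)) = W := span_range_coe_basis b
  obtain ⟨-, hright, hdisj⟩ := linearIndependent_sum.mp c.linearIndependent
  have hli : LinearIndependent R s :=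
    (b.linearIndependent.map' W.subtype W.ker_subtype).sum_type hright (by rwa [hW, ← hb] at hdisj)
  have hspan : Submodule.span R (Set.range s) = ⊤ := by
    rw [Set.Sum.elim_range, Submodule.span_union, hb, ← hW, ← Submodule.span_union,
      ← Set.Sum.elim_range, Sum.elim_comp_inl_inr, c.span_eq]
  exact ⟨Basis.mk hli hspan.ge, by simp [s], by simp [s]⟩

lemma exists_basis_X_pow_of_basis_degreeLT {R : Type*} [Ring R] {d : ℕ}
    (b : Basis (Fin d) R (degreeLT R d)) :
    ∃ s : Basis ℕ R R[X], (∀ i : Fin d, s i = b i) ∧ ∀ n, d ≤ n → s n = X ^ n := by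
  let c := (basisMonomials R).reindex (finSumNatEquiv d).symm
  have hc (x) : c x = X ^ finSumNatEquiv d x := by simp [c, X_pow_eq_monomial]
  obtain ⟨s, hlow, hhigh⟩ := exists_basis_sum_replace_inl c
    (by simpa [Function.comp_def, hc] using span_range_coe_basis (degreeLT.basis R d)) b
  refine ⟨s.reindex (finSumNatEquiv d), fun i => ?_, fun n hn => ?_⟩
  · rw [← hlow, s.reindex_apply, ← finSumNatEquiv_apply_left, Equiv.symm_apply_apply]
  · obtain ⟨k, rfl⟩ := Nat.exists_eq_add_of_le hn
    rw [← finSumNatEquiv_apply_right, s.reindex_apply, Equiv.symm_apply_apply, hhigh, hc]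

end Bases

lemma natDegree_sum_mul_iterate_derivative_le {R : Type*} [Semiring R] {I : Finset ℕ}
    {p : ℕ → R[X]} {h : ℤ} (hp : ∀ i ∈ I, p i ≠ 0 → ((p i).natDegree : ℤ) - i ≤ h) {q : R[X]}
    (hq : ∑ i ∈ I, p i * derivative^[i] q ≠ 0) :
    ((∑ i ∈ I, p i * derivative^[i] q).natDegree : ℤ) ≤ q.natDegree + h := by
  have hlead := leadingCoeff_ne_zero.mpr hq
  rw [leadingCoeff, finsetSum_coeff] at hlead
  obtain ⟨i, hi, hcoeff⟩ := Finset.exists_ne_zero_of_sum_ne_zero hlead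
  have hterm : p i * derivative^[i] q ≠ 0 := fun h0 => hcoeff (by rw [h0, coeff_zero])
  have hiq : i ≤ q.natDegree := not_lt.mp fun hlt =>
    right_ne_zero_of_mul hterm (iterate_derivative_eq_zero hlt)
  have hpi := hp i hi (left_ne_zero_of_mul hterm)
  have hterm_le := (le_natDegree_of_ne_zero hcoeff).trans natDegree_mul_le
  have hderiv_le := natDegree_iterate_derivative q i
  omega

lemma mem_span_X_pow_le_iff_natDegree_le {R : Type*} [Semiring R] {N : ℕ} {q : R[X]} :
    q ∈ Submodule.span R {r : R[X] | ∃ k ≤ N, r = X ^ k} ↔ q.natDegree ≤ N := by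
  classical
  have hset : {r : R[X] | ∃ k ≤ N, r = X ^ k} =
      ((Finset.range (N + 1)).image fun k => (X ^ k : R[X])) := by
    ext r
    simp [eq_comm]
  rw [hset, ← degreeLE_eq_span_X_pow, mem_degreeLE, natDegree_le_iff_degree_le]

theorem stmt_15_general {K : Type*} [Field K] (D : K[X] →ₗ[K] K[X]) {h : ℤ}
    (hD : ∀ q, D q ≠ 0 → ((D q).natDegree : ℤ) ≤ q.natDegree + h) {N : ℕ}
    (hN : ∀ n, N < n → D (X ^ n) ≠ 0 ∧ ((D (X ^ n)).natDegree : ℤ) = n + h) :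
    ∃ s : Module.Basis ℕ K K[X],
      (∀ n, N < n → s n = X ^ n) ∧
      (∀ n ≤ N, (s n).natDegree ≤ N) ∧
      (∀ n, D (s n) = 0 → n ≤ N) ∧
      StrictMonoOn (fun n => (D (s n)).natDegree) {n | D (s n) ≠ 0} := by
  have hdim : Module.finrank K (degreeLT K (N + 1)) = N + 1 := by
    simpa using Module.finrank_eq_card_basis (degreeLT.basis K (N + 1))
  obtain ⟨b, hb⟩ := exists_basis_strictMonoOn_natDegree (D.domRestrict (degreeLT K (N + 1))) hdim
  obtain ⟨s, hlow, hhigh⟩ := exists_basis_X_pow_of_basis_degreeLT b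
  have hsmall (n : ℕ) (hn : n ≤ N) : (s n).natDegree ≤ N := by
    rw [natDegree_le_iff_degree_le, ← mem_degreeLE, ← degreeLT_succ_eq_degreeLE]
    exact hlow ⟨n, Nat.lt_succ_of_le hn⟩ ▸ (b _).2
  refine ⟨s, hhigh, hsmall, fun n hn => ?_, fun m hm n hn hmn => ?_⟩
  · by_contra! hlt
    exact (hN n hlt).1 (hhigh n hlt ▸ hn)
  rcases le_or_gt n N with hnN | hnN
  · lift m to Fin (N + 1) using by omega
    lift n to Fin (N + 1) using by omega
    simp only [Set.mem_ofPred_eq, hlow] at hm hn ⊢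
    exact hb hm hn hmn
  · have hsm : (s m).natDegree < n := by
      rcases le_or_gt m N with hmN | hmN
      · exact (hsmall m hmN).trans_lt hnN
      · rwa [hhigh m hmN, natDegree_X_pow]
    have hDm := hD (s m) hm
    have hDn := (hN n hnN).2
    rw [← hhigh n hnN] at hDn
    dsimp only
    omega

/-- There exists a family `s = (s n)` of real polynomials such that:
(a) `s` is a basis of `ℝ[x]`; (b) `s n = Xⁿ` for `n > N`; (c) `s n ∈ span {Xᵏ : k ≤ N}`
for `n ≤ N`; (d) every `n` with `D (s n) = 0` satisfies `n ≤ N`; (e) `n ↦ deg D (s n)`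
is strictly increasing on `{n : D (s n) ≠ 0}`. That is, the matrix of `D` relative to
`(s, x)` is in pre-lower-row-echelon form and `s` is a standard basis associated with
`D` relative to the monomial basis. -/
theorem stmt_15 (ν : ℕ) (p : ℕ → Polynomial ℝ) (hp : ∃ i ≤ ν, p i ≠ 0)
    (D : Polynomial ℝ →ₗ[ℝ] Polynomial ℝ)
    (hD : ∀ q, D q = ∑ i ∈ Finset.range (ν + 1), p i * (Polynomial.derivative^[i] q))
    (h : ℤ)
    (hh : IsGreatest {z : ℤ | ∃ i ≤ ν, p i ≠ 0 ∧ z = ((p i).natDegree : ℤ) - i} h)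
    (N : ℕ)
    (hN : ∀ n : ℕ, N < n → D (X ^ n) ≠ 0 ∧ ((D (X ^ n)).natDegree : ℤ) = n + h) :
    ∃ s : ℕ → Polynomial ℝ,
      (LinearIndependent ℝ s ∧ Submodule.span ℝ (Set.range s) = ⊤) ∧
      (∀ n : ℕ, N < n → s n = X ^ n) ∧
      (∀ n ≤ N, s n ∈ Submodule.span ℝ {r : Polynomial ℝ | ∃ k ≤ N, r = X ^ k}) ∧
      (∀ n : ℕ, D (s n) = 0 → n ≤ N) ∧
      (∀ m n : ℕ, D (s m) ≠ 0 → D (s n) ≠ 0 → m < n →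
        (D (s m)).natDegree < (D (s n)).natDegree) := by
  have hdeg (q : ℝ[X]) (hq : D q ≠ 0) : ((D q).natDegree : ℤ) ≤ q.natDegree + h := by
    rw [hD] at hq ⊢
    refine natDegree_sum_mul_iterate_derivative_le (fun i hi hpi => hh.2 ⟨i, ?_, hpi, rfl⟩) hq
    exact Finset.mem_range_succ_iff.mp hi
  obtain ⟨s, hhigh, hlow, hker, hmono⟩ := stmt_15_general D hdeg hN
  exact ⟨s, ⟨s.linearIndependent, s.span_eq⟩, hhigh,
    fun n hn => mem_span_X_pow_le_iff_natDegree_le.mpr (hlow n hn), hker,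
    fun m n hm hn hmn => hmono hm hn hmn⟩
end
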